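/- The charge 1 BPS monopole (A, Φ) solves the Bogomolny equation F_A = ∗ d_A Φ on ℝ³∖{0}: for every x ∈ ℝ³∖{0} and all indices i, j ∈ {1,2,3}, one has ∂_i A_j(x) − ∂_j A_i(x) + A_i(x)A_j(x) − A_j(x)A_i(x) = Σ_{k=1}^{3} ε_{ijk} ( ∂_k Φ(x) + A_k(x)Φ(x) − Φ(x)A_k(x) ). -/

import Mathlib

noncomputable section

/-- 2×2 complex matrices, realised as functions `Fin 2 → Fin 2 → ℂ`. -/
abbrev Mat2 := Fin 2 → Fin 2 → ℂ

/-- Matrix multiplication on `Mat2`. -/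
def matMul (A B : Mat2) : Mat2 := fun i j => ∑ k, A i k * B k j

/-- The Pauli matrices τ¹, τ², τ³. -/
def pauli : Fin 3 → Mat2 :=
  ![![![0, 1], ![1, 0]], ![![0, -Complex.I], ![Complex.I, 0]], ![![1, 0], ![0, -1]]]

/-- The totally antisymmetric Levi-Civita symbol with ε₀₁₂ = 1 (indices 0,1,2). -/
def eps (i j k : Fin 3) : ℝ :=
  (((j : ℕ) : ℝ) - ((i : ℕ) : ℝ)) * (((k : ℕ) : ℝ) - ((j : ℕ) : ℝ)) *
    (((k : ℕ) : ℝ) - ((i : ℕ) : ℝ)) / 2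

/-- The Higgs field of the charge 1 BPS monopole of mass `v`:
`Φ(x) = (v coth(2vr) - 1/(2r)) Σₐ x̂ᵃ (i τᵃ)` with `r = ‖x‖`, `x̂ = x/r`. -/
def bpsPhi (v : ℝ) (x : EuclideanSpace ℝ (Fin 3)) : Mat2 :=
  (v * Real.cosh (2 * v * ‖x‖) / Real.sinh (2 * v * ‖x‖) - 1 / (2 * ‖x‖)) •
    ∑ a : Fin 3, (x a / ‖x‖) • (Complex.I • pauli a)

/-- The connection components of the charge 1 BPS monopole of mass `v`:
`A_i(x) = -(1/2)(1 - 2vr/sinh(2vr)) Σ_{j,a} ε_{ija} (x̂ʲ/r) (i τᵃ)`. -/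
def bpsA (v : ℝ) (i : Fin 3) (x : EuclideanSpace ℝ (Fin 3)) : Mat2 :=
  (-(1 / 2) * (1 - 2 * v * ‖x‖ / Real.sinh (2 * v * ‖x‖))) •
    ∑ j : Fin 3, ∑ a : Fin 3, (eps i j a * (x j / ‖x‖ ^ 2)) • (Complex.I • pauli a)

/-- Partial derivative `∂_i f (x)` of a matrix-valued function on ℝ³. -/
def pd (f : EuclideanSpace ℝ (Fin 3) → Mat2) (i : Fin 3)
    (x : EuclideanSpace ℝ (Fin 3)) : Mat2 :=
  fderiv ℝ f x (EuclideanSpace.single i 1)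

/-- The linear map x ↦ Σ x_a iτ^a. -/
def LPhi : EuclideanSpace ℝ (Fin 3) →L[ℝ] Mat2 :=
  ∑ a : Fin 3, (EuclideanSpace.proj a : EuclideanSpace ℝ (Fin 3) →L[ℝ] ℝ).smulRight
    (Complex.I • pauli a)

/-- The linear map x ↦ Σ ε_{ija} x_j iτ^a. -/
def LA (i : Fin 3) : EuclideanSpace ℝ (Fin 3) →L[ℝ] Mat2 :=
  ∑ j : Fin 3, ∑ a : Fin 3,
    (EuclideanSpace.proj j : EuclideanSpace ℝ (Fin 3) →L[ℝ] ℝ).smulRight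
      (eps i j a • (Complex.I • pauli a))

set_option maxHeartbeats 8000000

lemma matMul_entry (A B : Mat2) (s t : Fin 2) :
    matMul A B s t = A s 0 * B 0 t + A s 1 * B 1 t := by
  simp [matMul, Fin.sum_univ_two]

lemma LPhi_apply (x : EuclideanSpace ℝ (Fin 3)) :
    LPhi x = ∑ a : Fin 3, x a • (Complex.I • pauli a) := by
  simp [LPhi]

lemma LA_apply (i : Fin 3) (x : EuclideanSpace ℝ (Fin 3)) :
    LA i x = ∑ j : Fin 3, ∑ a : Fin 3, (x j * eps i j a) • (Complex.I • pauli a) := by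
  simp only [LA, _root_.sum_apply, ContinuousLinearMap.smulRight_apply, mul_smul]
  rfl

lemma pd_radial (g : ℝ → ℝ) (g' : ℝ) (L : EuclideanSpace ℝ (Fin 3) →L[ℝ] Mat2)
    (x : EuclideanSpace ℝ (Fin 3)) (hx : x ≠ 0) (hg : HasDerivAt g g' ‖x‖) (k : Fin 3) :
    pd (fun y => g ‖y‖ • L y) k x =
      g ‖x‖ • L (EuclideanSpace.single k 1) + (g' / ‖x‖ * x k) • L x := by
  have hr : ‖x‖ ≠ 0 := norm_ne_zero_iff.mpr hx
  have h2 : HasFDerivAt (fun y : EuclideanSpace ℝ (Fin 3) => ‖y‖ ^ 2) (2 • innerSL ℝ x) x :=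
    (hasStrictFDerivAt_norm_sq x).hasFDerivAt
  have h3 := h2.sqrt (by positivity)
  have h4 : (fun y : EuclideanSpace ℝ (Fin 3) => √(‖y‖ ^ 2)) = fun y => ‖y‖ := by
    funext y; exact Real.sqrt_sq (norm_nonneg y)
  rw [h4, Real.sqrt_sq (norm_nonneg x)] at h3
  have h5 := (hg.comp_hasFDerivAt x h3).smul L.hasFDerivAt
  unfold pd
  have h6 : (fun y => g ‖y‖ • L y) = ((g ∘ fun y : EuclideanSpace ℝ (Fin 3) => ‖y‖) • ⇑L) := rfl
  rw [h6, h5.fderiv]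
  have h7 : inner ℝ x (EuclideanSpace.single k (1:ℝ)) = x k := by
    simp [EuclideanSpace.inner_single_right]
  simp only [_root_.add_apply, _root_.smul_apply,
    ContinuousLinearMap.smulRight_apply, innerSL_apply_apply, h7, Function.comp]
  congr 2
  simp only [smul_eq_mul, nsmul_eq_mul]
  field_simp
  norm_num

/-- Radial profile of the Higgs field. -/
def pR (v r : ℝ) : ℝ :=
  (v * Real.cosh (2 * v * r) / Real.sinh (2 * v * r) - 1 / (2 * r)) / r

/-- Radial profile of the connection. -/
def qR (v r : ℝ) : ℝ :=
  (-(1 / 2) * (1 - 2 * v * r / Real.sinh (2 * v * r))) / r ^ 2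

lemma bpsPhi_eq (v : ℝ) : bpsPhi v = fun y => pR v ‖y‖ • LPhi y := by
  funext y
  simp only [bpsPhi, pR, LPhi_apply, Finset.smul_sum, smul_smul]
  refine Finset.sum_congr rfl fun a _ => ?_
  congr 1
  ring

lemma bpsA_eq (v : ℝ) (i : Fin 3) : bpsA v i = fun y => qR v ‖y‖ • LA i y := by
  funext y
  simp only [bpsA, qR, LA_apply, Finset.smul_sum, smul_smul]
  refine Finset.sum_congr rfl fun a _ => Finset.sum_congr rfl fun b _ => ?_
  congr 1
  ring

lemma qR_deriv (v r : ℝ) (hv : 0 < v) (hr : 0 < r) :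
    HasDerivAt (qR v) ((-2 * qR v r - pR v r * (1 + 2 * r ^ 2 * qR v r)) / r) r := by
  have hs : Real.sinh (2 * v * r) ≠ 0 := (Real.sinh_pos_iff.mpr (by positivity)).ne'
  have hl : HasDerivAt (fun r : ℝ => 2 * v * r) (2 * v) r := by
    simpa using (hasDerivAt_id r).const_mul (2 * v)
  have h := ((((hl.div hl.sinh hs).const_sub 1).const_mul (-(1 / 2) : ℝ)).div
    (hasDerivAt_pow 2 r) (by positivity))
  refine HasDerivAt.congr_deriv (f := qR v) h ?_
  simp only [qR, pR, Pi.div_apply]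
  field_simp
  ring

lemma pR_deriv (v r : ℝ) (hv : 0 < v) (hr : 0 < r) :
    HasDerivAt (pR v) ((-2 * qR v r - 2 * r ^ 2 * qR v r ^ 2 - pR v r) / r) r := by
  have hs : Real.sinh (2 * v * r) ≠ 0 := (Real.sinh_pos_iff.mpr (by positivity)).ne'
  have hl : HasDerivAt (fun r : ℝ => 2 * v * r) (2 * v) r := by
    simpa using (hasDerivAt_id r).const_mul (2 * v)
  have hl2 : HasDerivAt (fun r : ℝ => 2 * r) 2 r := by
    simpa using (hasDerivAt_id r).const_mul (2 : ℝ)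
  have h := ((((hl.cosh.const_mul v).div hl.sinh hs).sub
    ((hasDerivAt_const r (1:ℝ)).div hl2 (by positivity))).div (hasDerivAt_id r) hr.ne')
  refine HasDerivAt.congr_deriv (f := pR v) h ?_
  have hc := Real.cosh_sq (2 * v * r)
  simp only [qR, pR, id, Pi.div_apply, Pi.sub_apply]
  field_simp
  ring_nf
  ring_nf at hc
  simp only [hc]
  ring

/-- The charge 1 BPS monopole solves the Bogomolny equation `F_A = ∗ d_A Φ` on ℝ³∖{0}:
for all `i, j`, `∂_i A_j - ∂_j A_i + [A_i, A_j] = Σ_k ε_{ijk} (∂_k Φ + [A_k, Φ])`. -/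
theorem bps_monopole_solves_bogomolny (v : ℝ) (hv : 0 < v)
    (x : EuclideanSpace ℝ (Fin 3)) (hx : x ≠ 0) (i j : Fin 3) :
    pd (bpsA v j) i x - pd (bpsA v i) j x
      + matMul (bpsA v i x) (bpsA v j x) - matMul (bpsA v j x) (bpsA v i x)
      = ∑ k : Fin 3, eps i j k •
          (pd (bpsPhi v) k x + matMul (bpsA v k x) (bpsPhi v x)
            - matMul (bpsPhi v x) (bpsA v k x)) := by
  have hr : 0 < ‖x‖ := norm_pos_iff.mpr hx
  have hA : ∀ i j, pd (bpsA v j) i x = _ := fun i j =>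
    (congrArg (fun f => pd f i x) (bpsA_eq v j)).trans
      (pd_radial _ _ (LA j) x hx (qR_deriv v _ hv hr) i)
  have hP : ∀ k, pd (bpsPhi v) k x = _ := fun k =>
    (congrArg (fun f => pd f k x) (bpsPhi_eq v)).trans
      (pd_radial _ _ LPhi x hx (pR_deriv v _ hv hr) k)
  have hn : ‖x‖ ^ 2 = x 0 ^ 2 + x 1 ^ 2 + x 2 ^ 2 := by
    rw [EuclideanSpace.norm_sq_eq]; simp [Fin.sum_univ_three]
  simp only [hA, hP]
  simp only [bpsA_eq, bpsPhi_eq]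
  generalize pR v ‖x‖ = p
  generalize qR v ‖x‖ = q
  obtain ⟨Q, hQ⟩ : ∃ Q, Q = (-2 * q - p * (1 + 2 * ‖x‖ ^ 2 * q)) / ‖x‖ / ‖x‖ := ⟨_, rfl⟩
  have h2 : (-2 * q - 2 * ‖x‖ ^ 2 * q ^ 2 - p) / ‖x‖ / ‖x‖ = Q + 2 * p * q - 2 * q ^ 2 := by
    rw [hQ]; field_simp; ring
  have h1 : (x 0 ^ 2 + x 1 ^ 2 + x 2 ^ 2) * Q
      = -2 * q - p * (1 + 2 * (x 0 ^ 2 + x 1 ^ 2 + x 2 ^ 2) * q) := by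
    rw [← hn, hQ]; field_simp
  rw [← hQ, h2]
  clear hQ h2 hA hP hn
  simp only [LA_apply, LPhi_apply]
  have h1' : ((x 0 : ℂ) ^ 2 + (x 1 : ℂ) ^ 2 + (x 2 : ℂ) ^ 2) * (Q : ℂ)
      = -2 * q - p * (1 + 2 * ((x 0 : ℂ) ^ 2 + (x 1 : ℂ) ^ 2 + (x 2 : ℂ) ^ 2) * q) := by
    have := congrArg (fun z : ℝ => (z : ℂ)) h1
    push_cast at this
    exact this
  clear h1
  have hI := Complex.I_sq
  ext s t
  simp only [Finset.sum_apply, Pi.add_apply, Pi.sub_apply, Pi.smul_apply, matMul_entry]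
  fin_cases i <;> fin_cases j <;> fin_cases s <;> fin_cases t <;>
    simp [Fin.sum_univ_three, eps, pauli] <;>
    (try norm_num) <;> grind

end
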